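/- arXiv:2510.24312 — 7 statements merged into one kernel-verified Lean document; each statement's English description precedes it below -/
import Mathlib

section
/- Let n and k be positive integers. The equation (n‼)^k − n^k = (k‼)^n − k^n holds if and only if k = n or (k,n) is one of (1,2), (2,1), (1,3), (3,1), (2,3), (3,2). -/
open Nat

/-!
The equation is symmetric under swapping `n` and `k`, so take `k < n`. As `m‼ = m` for `m ≤ 3`
(`m ≠ 0`), both sides vanish when `n ≤ 3`; when `k ≤ 3 < n` only the right side vanishes, because
`n < n‼`. For `4 ≤ k < n` the left side is strictly larger, since `n ^ k < k ^ n`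
(the sequence `m ^ (1 / m)` decreases from `m = 3` on) and `k‼ ^ n ≤ n‼ ^ k`
(the sequence `m‼ ^ (1 / m)` increases).

The second monotonicity is `n‼ ^ (n + 1) ≤ (n + 1)‼ ^ n`, that is, `n‼ ≤ w ^ n` for the ratio
`w = (n + 1)‼ / n‼`. It follows from `(n + 2) / 2 ≤ w ^ 2` and `n‼ ^ 2 ≤ ((n + 2) / 2) ^ n`,
both of which are proved by induction in steps of two.
-/

/-- Bernoulli's inequality with its second-order term. -/
lemma one_add_pow_ge_second_order (x : ℝ) (hx : 0 ≤ x) (n : ℕ) :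
    1 + n * x + n * (n - 1) / 2 * x ^ 2 ≤ (1 + x) ^ n := by
  induction n with
  | zero => simp
  | succ m ih =>
    have h := mul_le_mul_of_nonneg_right ih (by linarith : 0 ≤ 1 + x)
    have h2 : 0 ≤ (m : ℝ) * (m - 1) := by
      rcases m with _ | m
      · simp
      · push_cast; ring_nf; positivity
    have h3 : 0 ≤ (m : ℝ) * (m - 1) * x ^ 3 := by positivity
    rw [pow_succ (1 + x)]
    push_cast
    nlinarith

lemma four_mul_pow_self_le (N : ℕ) (hN : 2 ≤ N) : 4 * N ^ N ≤ (N + 2) ^ N := by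
  have hN' : (2 : ℝ) ≤ N := by exact_mod_cast hN
  have hpos : (0 : ℝ) < N := by linarith
  have h := one_add_pow_ge_second_order (2 / N) (by positivity) N
  have h4 : (4 : ℝ) ≤ (1 + 2 / N) ^ N := by
    refine le_trans ?_ h
    have e : 1 + (N : ℝ) * (2 / N) + N * (N - 1) / 2 * (2 / N) ^ 2 = 5 - 2 / N := by
      field_simp; ring
    have : (2 : ℝ) / N ≤ 1 := by rw [div_le_one hpos]; exact hN'
    rw [e]; linarith
  have e : ((N : ℝ) + 2) ^ N = (1 + 2 / N) ^ N * N ^ N := by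
    rw [← mul_pow]; congr 1; field_simp
  have : (4 : ℝ) * N ^ N ≤ (N + 2) ^ N := by
    rw [e]; gcongr
  exact_mod_cast this

lemma doubleFactorial_ratio_sq (n : ℕ) : (n + 2) * n‼ ^ 2 ≤ 2 * (n + 1)‼ ^ 2 := by
  induction n using Nat.twoStepInduction with
  | zero => simp
  | one => decide
  | more n ih _ =>
    rw [show n + 2 + 1 = (n + 1) + 2 by ring, Nat.doubleFactorial_add_two,
      Nat.doubleFactorial_add_two]
    have h := Nat.mul_le_mul_left ((n + 1 + 2) ^ 2) ih
    have h2 : (n + 2 + 2) * (n + 2) ^ 2 ≤ (n + 1 + 2) ^ 2 * (n + 2) := by nlinarith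
    have h3 := Nat.mul_le_mul_right (n‼ ^ 2) h2
    nlinarith

lemma doubleFactorial_sq_le (n : ℕ) : 2 ^ n * n‼ ^ 2 ≤ (n + 2) ^ n := by
  induction n using Nat.twoStepInduction with
  | zero => simp
  | one => decide
  | more n ih _ =>
    rw [Nat.doubleFactorial_add_two]
    calc 2 ^ (n + 2) * ((n + 2) * n‼) ^ 2 = 4 * (n + 2) ^ 2 * (2 ^ n * n‼ ^ 2) := by ring
      _ ≤ 4 * (n + 2) ^ 2 * (n + 2) ^ n := Nat.mul_le_mul_left _ ih
      _ = 4 * (n + 2) ^ (n + 2) := by ring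
      _ ≤ _ := four_mul_pow_self_le (n + 2) (by omega)

lemma doubleFactorial_pow_succ_le (n : ℕ) : n‼ ^ (n + 1) ≤ (n + 1)‼ ^ n := by
  have h1 := Nat.pow_le_pow_left (doubleFactorial_ratio_sq n) n
  have h : 2 ^ n * (n‼ ^ (n + 1)) ^ 2 ≤ 2 ^ n * ((n + 1)‼ ^ n) ^ 2 := by
    calc 2 ^ n * (n‼ ^ (n + 1)) ^ 2 = (2 ^ n * n‼ ^ 2) * (n‼ ^ 2) ^ n := by ring
      _ ≤ (n + 2) ^ n * (n‼ ^ 2) ^ n := Nat.mul_le_mul_right _ (doubleFactorial_sq_le n)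
      _ = ((n + 2) * n‼ ^ 2) ^ n := by rw [mul_pow]
      _ ≤ (2 * (n + 1)‼ ^ 2) ^ n := h1
      _ = _ := by ring
  exact (Nat.pow_le_pow_iff_left (by norm_num)).1 (Nat.le_of_mul_le_mul_left h (by positivity))

lemma doubleFactorial_pow_le (k n : ℕ) (hk : 0 < k) (h : k ≤ n) : k‼ ^ n ≤ n‼ ^ k := by
  induction n, h using Nat.le_induction with
  | base => exact le_rfl
  | succ n hn ih =>
    rw [← Nat.pow_le_pow_iff_left (n := n) (by omega)]
    calc (k‼ ^ (n + 1)) ^ n = (k‼ ^ n) ^ (n + 1) := by rw [← pow_mul, ← pow_mul, mul_comm]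
      _ ≤ (n‼ ^ k) ^ (n + 1) := Nat.pow_le_pow_left ih _
      _ = (n‼ ^ (n + 1)) ^ k := by rw [← pow_mul, ← pow_mul, mul_comm]
      _ ≤ ((n + 1)‼ ^ n) ^ k := Nat.pow_le_pow_left (doubleFactorial_pow_succ_le n) _
      _ = ((n + 1)‼ ^ k) ^ n := by rw [← pow_mul, ← pow_mul, mul_comm]

lemma succ_pow_lt_pow_succ (n : ℕ) (h : 3 ≤ n) : (n + 1) ^ n < n ^ (n + 1) := by
  induction n, h using Nat.le_induction with
  | base => norm_num
  | succ n hn ih =>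
    refine Nat.lt_of_mul_lt_mul_left (a := n ^ (n + 1)) ?_
    calc n ^ (n + 1) * (n + 1 + 1) ^ (n + 1) = (n * (n + 2)) ^ (n + 1) := by rw [mul_pow]
      _ ≤ ((n + 1) ^ 2) ^ (n + 1) := Nat.pow_le_pow_left (by nlinarith) _
      _ = (n + 1) ^ n * (n + 1) ^ (n + 1 + 1) := by
        rw [← pow_mul, ← pow_add]; congr 1; ring
      _ < n ^ (n + 1) * (n + 1) ^ (n + 1 + 1) := Nat.mul_lt_mul_of_pos_right ih (by positivity)

lemma pow_lt_pow_swap (k n : ℕ) (hk : 3 ≤ k) (h : k < n) : n ^ k < k ^ n := by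
  induction n, h using Nat.le_induction with
  | base => exact succ_pow_lt_pow_succ k hk
  | succ n hn ih =>
    have hn : k + 1 ≤ n := hn
    rw [← Nat.pow_lt_pow_iff_left (n := n) (by omega)]
    calc ((n + 1) ^ k) ^ n = ((n + 1) ^ n) ^ k := by rw [← pow_mul, ← pow_mul, mul_comm]
      _ < (n ^ (n + 1)) ^ k :=
        Nat.pow_lt_pow_left (succ_pow_lt_pow_succ n (by omega)) (by omega)
      _ = (n ^ k) ^ (n + 1) := by rw [← pow_mul, ← pow_mul, mul_comm]
      _ ≤ (k ^ n) ^ (n + 1) := Nat.pow_le_pow_left ih.le _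
      _ = (k ^ (n + 1)) ^ n := by rw [← pow_mul, ← pow_mul, mul_comm]

lemma lt_doubleFactorial (n : ℕ) (h : 4 ≤ n) : n < n‼ := by
  obtain ⟨m, rfl⟩ := Nat.exists_eq_add_of_le' h
  rw [show m + 4 = m + 2 + 2 by ring, Nat.doubleFactorial_add_two, Nat.doubleFactorial_add_two]
  have := Nat.doubleFactorial_pos m
  have : 2 ≤ (m + 2) * m‼ := by nlinarith
  nlinarith

lemma doubleFactorial_eq_self (k : ℕ) (hk : 0 < k) (h : k ≤ 3) : k‼ = k := by
  interval_cases k <;> rfl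

lemma doubleFactorial_sub_lt (k n : ℕ) (hk : 0 < k) (h : k < n) (hn : 4 ≤ n) :
    ((k‼ : ℤ)) ^ n - (k : ℤ) ^ n < ((n‼ : ℤ)) ^ k - (n : ℤ) ^ k := by
  rcases le_or_gt k 3 with h3 | h3
  · rw [doubleFactorial_eq_self k hk h3]
    have : (n : ℤ) ^ k < (n‼ : ℤ) ^ k := by
      exact_mod_cast Nat.pow_lt_pow_left (lt_doubleFactorial n hn) (by omega)
    linarith
  · have h1 : (k‼ : ℤ) ^ n ≤ (n‼ : ℤ) ^ k := by
      exact_mod_cast doubleFactorial_pow_le k n hk h.le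
    have h2 : (n : ℤ) ^ k < (k : ℤ) ^ n := by
      exact_mod_cast pow_lt_pow_swap k n h3.le h
    linarith

theorem doubleFactorial_sub_eq_iff (n k : ℕ) (hn : 0 < n) (hk : 0 < k) :
    ((n‼ : ℤ)) ^ k - (n : ℤ) ^ k = ((k‼ : ℤ)) ^ n - (k : ℤ) ^ n ↔
      k = n ∨ (k, n) = (1, 2) ∨ (k, n) = (2, 1) ∨ (k, n) = (1, 3) ∨ (k, n) = (3, 1) ∨
        (k, n) = (2, 3) ∨ (k, n) = (3, 2) := by
  simp only [Prod.mk.injEq]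
  constructor
  · intro h
    rcases lt_trichotomy k n with hlt | heq | hgt
    · have : n < 4 := by
        by_contra! h4
        exact absurd h (doubleFactorial_sub_lt k n hk hlt h4).ne'
      omega
    · exact Or.inl heq
    · have : k < 4 := by
        by_contra! h4
        exact absurd h (doubleFactorial_sub_lt n k hn hgt h4).ne
      omega
  · intro h
    rcases eq_or_ne k n with rfl | hne
    · rfl
    · rw [doubleFactorial_eq_self n hn (by omega), doubleFactorial_eq_self k hk (by omega)]
      simp
end

section
/- Let n and k be positive integers. The equation (n‼)^(k‼) + n^k = (k‼)^(n‼) + k^n holds if and only if k = n. -/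
/-!
By symmetry it suffices to show that the two sides differ when `n < k`. For `3 ≤ a < b` one has
`b ^ a < a ^ b` (`pow_lt_pow_swap`). The double factorial is strictly increasing from `2` on, so for
`3 ≤ n < k` this applies both to `(n, k)` and to `(n‼, k‼)`, and the left side is strictly larger.
For `n = 2` and `k ≥ 4` the same comparison follows from `m ^ 2 ≤ 2 ^ m` for `m ≥ 4`, strict for
`m ≥ 5`. The cases `n = 1` and `(n, k) = (2, 3)` are immediate; there the right side is larger.
-/

open Nat

/-- With `log (b / a) < b / a - 1` one gets `a log b < a log a + (b - a)`, and this is at most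
`b log a` because `log a ≥ 1` for `a ≥ 3 > e`. -/
lemma pow_lt_pow_swap_s4 {a b : ℕ} (ha : 3 ≤ a) (hab : a < b) : b ^ a < a ^ b := by
  have ha' : (3 : ℝ) ≤ a := by exact_mod_cast ha
  have hab' : (a : ℝ) < b := by exact_mod_cast hab
  have ha0 : (0 : ℝ) < a := by linarith
  have hb0 : (0 : ℝ) < b := by linarith
  have hlog : 1 ≤ Real.log a := by
    rw [Real.le_log_iff_exp_le ha0]
    linarith [Real.exp_one_lt_d9]
  have h1 : Real.log (b / a) < b / a - 1 :=
    Real.log_lt_sub_one_of_pos (by positivity) ((one_lt_div ha0).2 hab').ne'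
  rw [Real.log_div hb0.ne' ha0.ne'] at h1
  have h2 : (a : ℝ) * (Real.log b - Real.log a) < b - a := by
    calc (a : ℝ) * (Real.log b - Real.log a) < a * (b / a - 1) := by gcongr
      _ = b - a := by field_simp
  have h3 : (a : ℝ) * Real.log b < b * Real.log a := by
    nlinarith [mul_nonneg (sub_nonneg.2 hab'.le) (sub_nonneg.2 hlog)]
  have h4 : (b : ℝ) ^ a < (a : ℝ) ^ b := by
    rw [← Real.log_lt_log_iff (by positivity) (by positivity), Real.log_pow, Real.log_pow]
    exact h3
  exact_mod_cast h4

lemma sq_lt_two_pow_of_five_le {m : ℕ} (hm : 5 ≤ m) : m ^ 2 < 2 ^ m := by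
  induction m, hm using Nat.le_induction with
  | base => norm_num
  | succ m hm ih => rw [pow_succ 2 m]; nlinarith

lemma doubleFactorial_lt_succ (n : ℕ) : (n + 2)‼ < (n + 3)‼ := by
  induction n using Nat.twoStepInduction with
  | zero => decide
  | one => decide
  | more n ih _ =>
    rw [Nat.doubleFactorial_add_two (n + 2), Nat.doubleFactorial_add_two (n + 3)]
    nlinarith

lemma doubleFactorial_lt {n k : ℕ} (hn : 2 ≤ n) (h : n < k) : n‼ < k‼ := by
  have hmono : StrictMono fun i : ℕ => (i + 2)‼ := strictMono_nat_of_lt_succ doubleFactorial_lt_succ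
  obtain ⟨i, rfl⟩ := Nat.exists_eq_add_of_le' hn
  obtain ⟨j, rfl⟩ := Nat.exists_eq_add_of_le' (hn.trans h.le)
  exact hmono (by omega : i < j)

lemma sides_ne_of_lt {n k : ℕ} (hn : 0 < n) (h : n < k) :
    (n‼) ^ (k‼) + n ^ k ≠ (k‼) ^ (n‼) + k ^ n := by
  obtain rfl | rfl | hn3 : n = 1 ∨ n = 2 ∨ 3 ≤ n := by omega
  · have := Nat.doubleFactorial_pos k
    simp only [Nat.doubleFactorial, one_pow, pow_one]
    omega
  · obtain rfl | hk : k = 3 ∨ 4 ≤ k := by omega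
    · decide
    · have h4 : 8 ≤ k‼ := by
        obtain rfl | hk' : k = 4 ∨ 4 < k := by omega
        · decide
        · exact (doubleFactorial_lt (n := 4) (by norm_num) hk').le
      have h5 := sq_lt_two_pow_of_five_le (show 5 ≤ k‼ by omega)
      have h6 : k ^ 2 ≤ 2 ^ k := by
        obtain rfl | hk' : k = 4 ∨ 5 ≤ k := by omega
        · norm_num
        · exact (sq_lt_two_pow_of_five_le hk').le
      have h7 : 2‼ = 2 := rfl
      rw [h7]
      omega
  · have h3 : 3 ≤ n‼ := by
      obtain rfl | hn' : n = 3 ∨ 3 < n := by omega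
      · decide
      · exact (doubleFactorial_lt (n := 3) (by norm_num) hn').le
    have h1 := pow_lt_pow_swap_s4 hn3 h
    have h2 := pow_lt_pow_swap_s4 h3 (doubleFactorial_lt (by omega) h)
    omega

theorem doubleFactorial_pow_doubleFactorial_add_eq_iff (n k : ℕ) (hn : 0 < n) (hk : 0 < k) :
    (n‼) ^ (k‼) + n ^ k = (k‼) ^ (n‼) + k ^ n ↔ k = n := by
  constructor
  · intro h
    rcases lt_trichotomy n k with hlt | heq | hgt
    · exact absurd h (sides_ne_of_lt hn hlt)
    · exact heq.symm
    · exact absurd h.symm (sides_ne_of_lt hk hgt)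
  · rintro rfl
    rfl
end

section
/- For every integer n ≥ 2, one has (n‼)^(n−1) > ((n−1)‼)^n; equivalently, the sequence n ↦ (n‼)^(1/n) is strictly increasing for n ≥ 2. -/
open Nat

/-!
The proof is by induction in steps of two, since `(n + 2)‼ = (n + 2) * n‼`. Passing from `n` to
`n + 2` multiplies the left side by `(n + 1) ^ (n + 2) * ((n - 1)‼) ^ 2` and the right side by
`(n + 2) ^ (n + 1) * (n‼) ^ 2`. The second factor is at least the first, because
`(1 + 1 / (n + 1)) ^ (n + 1) ≥ 2` (Bernoulli, `two_mul_pow_le_succ_pow`) and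
`(n‼ / (n - 1)‼) ^ 2 ≥ (n + 1) / 2` (`mul_doubleFactorial_sq_le`). Throughout, `k = n - 1`.
-/

lemma two_mul_pow_le_succ_pow (m : ℕ) (hm : 1 ≤ m) : 2 * m ^ m ≤ (m + 1) ^ m := by
  -- Of the expansion of `(m + 1) ^ m`, the first two terms are `m ^ m` and `m * m ^ (m - 1)`.
  obtain ⟨j, rfl⟩ : ∃ j, m = j + 1 := ⟨m - 1, by omega⟩
  have h := add_pow (j + 1) 1 (j + 1)
  rw [Finset.sum_range_succ, Finset.sum_range_succ] at h
  simp only [one_pow, mul_one, choose_self, choose_succ_self_right, cast_id] at h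
  have e : (j + 1) ^ (j + 1) = (j + 1) ^ j * (j + 1) := pow_succ _ _
  omega

/-- Lower bound on the ratio of consecutive double factorials. It propagates from `k` to `k + 2`
because `(k + 2) * (k + 4) ≤ (k + 3) ^ 2`. -/
lemma mul_doubleFactorial_sq_le : ∀ k : ℕ, (k + 2) * k‼ ^ 2 ≤ 2 * (k + 1)‼ ^ 2
  | 0 => by decide
  | 1 => by decide
  | k + 2 => by
    have ih := mul_doubleFactorial_sq_le k
    rw [show k + 2 + 1 = k + 1 + 2 by ring, doubleFactorial_add_two, doubleFactorial_add_two]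
    calc (k + 2 + 2) * ((k + 2) * k‼) ^ 2
        = ((k + 4) * (k + 2)) * ((k + 2) * k‼ ^ 2) := by ring
      _ ≤ (k + 3) ^ 2 * (2 * (k + 1)‼ ^ 2) := by
        gcongr
        nlinarith
      _ = 2 * ((k + 1 + 2) * (k + 1)‼) ^ 2 := by ring

lemma doubleFactorial_pow_lt : ∀ k : ℕ, 1 ≤ k → k‼ ^ (k + 1) < (k + 1)‼ ^ k
  | 0, h => by omega
  | 1, _ => by decide
  | 2, _ => by decide
  | k + 3, _ => by
    have ih := doubleFactorial_pow_lt (k + 1) (by omega)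
    have hB := two_mul_pow_le_succ_pow (k + 3) (by omega)
    have hQ := mul_doubleFactorial_sq_le (k + 1)
    rw [show k + 3 + 1 = k + 1 + 1 + 2 by ring, show k + 3 = k + 1 + 2 by ring,
      doubleFactorial_add_two, doubleFactorial_add_two]
    generalize (k + 1)‼ = a at *
    generalize hb : (k + 1 + 1)‼ = b at *
    have hb0 : 0 < b := hb ▸ doubleFactorial_pos _
    have key : (k + 3) ^ (k + 4) * a ^ 2 ≤ (k + 4) ^ (k + 3) * b ^ 2 := by
      have h := Nat.mul_le_mul hB hQ
      have e : 2 * (k + 3) ^ (k + 3) * ((k + 1 + 2) * a ^ 2)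
          = 2 * ((k + 3) ^ (k + 4) * a ^ 2) := by ring
      have e' : (k + 3 + 1) ^ (k + 3) * (2 * b ^ 2)
          = 2 * ((k + 4) ^ (k + 3) * b ^ 2) := by ring
      omega
    calc ((k + 1 + 2) * a) ^ (k + 1 + 1 + 2)
        = ((k + 3) ^ (k + 4) * a ^ 2) * a ^ (k + 1 + 1) := by rw [mul_pow]; ring
      _ ≤ ((k + 4) ^ (k + 3) * b ^ 2) * a ^ (k + 1 + 1) := by gcongr
      _ < ((k + 4) ^ (k + 3) * b ^ 2) * b ^ (k + 1) := by gcongr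
      _ = ((k + 1 + 1 + 2) * b) ^ (k + 1 + 2) := by rw [mul_pow]; ring

theorem doubleFactorial_pow_strict_mono (n : ℕ) (hn : 2 ≤ n) :
    ((n - 1)‼) ^ n < (n‼) ^ (n - 1) := by
  obtain ⟨k, rfl⟩ : ∃ k, n = k + 1 := ⟨n - 1, by omega⟩
  exact doubleFactorial_pow_lt k (by omega)
end

section
/- For every integer k ≥ 4, one has k^k < (k‼)^(k−1); equivalently, k^(k/(k−1)) < k‼. -/
/-!
For `k ≥ 6` we have `k‼ = k * (k - 2) * (k - 4)‼ ≥ k * (2 * (k - 2)) ≥ k ^ 2`, so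
`(k‼) ^ (k - 1) ≥ k ^ (2 * (k - 1)) > k ^ k`. The cases `k = 4, 5` are numerical.
-/

open Nat

theorem pow_self_lt_doubleFactorial_pow (k : ℕ) (hk : 4 ≤ k) :
    k ^ k < (k‼) ^ (k - 1) := by
  rcases (by omega : k = 4 ∨ k = 5 ∨ 6 ≤ k) with rfl | rfl | h6
  · decide
  · decide
  · obtain ⟨m, rfl⟩ := Nat.exists_eq_add_of_le' h6
    have hsq : (m + 6) ^ 2 ≤ (m + 6)‼ := by
      have h0 : 0 < m‼ := Nat.doubleFactorial_pos m
      have h2 : 2 ≤ (m + 2) * m‼ := by nlinarith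
      calc (m + 6) ^ 2 ≤ (m + 6) * ((m + 4) * 2) := by nlinarith
        _ ≤ (m + 6) * ((m + 4) * ((m + 2) * m‼)) := by gcongr
        _ = (m + 6)‼ := by simp only [Nat.doubleFactorial]
    calc (m + 6) ^ (m + 6) < (m + 6) ^ (2 * (m + 6 - 1)) :=
          Nat.pow_lt_pow_right (by omega) (by omega)
      _ = ((m + 6) ^ 2) ^ (m + 6 - 1) := pow_mul _ _ _
      _ ≤ ((m + 6)‼) ^ (m + 6 - 1) := Nat.pow_le_pow_left hsq _
end

section
/- Fix a non-zero integer b, positive integers A_1, ..., A_r, and a positive integer d with d > r. Then the set of tuples (n_1, ..., n_r, x) with each n_i a positive integer and x an integer satisfying b·(n_1‼)·A_1^(n_1)·(n_2‼)·A_2^(n_2)···(n_r‼)·A_r^(n_r) = x^d is finite. -/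
/-!
Put `m i = n i` if `n i` is odd and `m i = n i / 2` if `n i` is even, and let `M` be the largest `m i`.
By Bertrand's postulate there is a prime `p` with `M / 2 < p ≤ M`. An odd prime `p` with `m i < 2 * p`
occurs in `(n i)‼` with exponent exactly `m i / p ≤ 1` (`factorization_doubleFactorial`), so its
exponent in `∏ i, (n i)‼` lies between `1` and `r < d`. If `M` is large compared with `b * ∏ i, A i`,
then `p` does not divide `b` or any `A i`, so that this exponent is also the one in `x ^ d`, hence a
multiple of `d`: a contradiction. Thus the `n i` are bounded, and each choice of the `n i` leaves
finitely many `x`.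
-/

open Nat

/-- The scale that governs the large odd primes of `n‼`: an odd prime divides `n‼` iff it is at most
`oddScale n`, which is `n` for odd `n` and `n / 2` for even `n`. -/
def oddScale (n : ℕ) : ℕ := if Even n then n / 2 else n

lemma le_two_mul_oddScale (n : ℕ) : n ≤ 2 * oddScale n := by
  unfold oddScale
  split_ifs with h
  · rw [Nat.two_mul_div_two_of_even h]
  · omega

lemma factorization_factorial_of_lt {p k : ℕ} (hp : p.Prime) (hp2 : 2 < p) (hk : k < 2 * p) :
    (k !).factorization p = k / p := by
  have hlog : Nat.log p k < 2 := Nat.log_lt_of_lt_pow' (by norm_num) (by nlinarith)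
  rw [Nat.factorization_factorial hp hlog]
  simp

lemma factorization_two_mul_doubleFactorial {p k : ℕ} (hp : p.Prime) (hp2 : 2 < p)
    (hk : k < 2 * p) : ((2 * k)‼).factorization p = k / p := by
  rw [Nat.doubleFactorial_two_mul, Nat.factorization_mul (by positivity) (Nat.factorial_ne_zero k),
    Finsupp.add_apply, factorization_factorial_of_lt hp hp2 hk, Nat.factorization_pow,
    Nat.prime_two.factorization]
  simp [hp2.ne]

/-- For odd `n = 2 * k + 1` this follows from `n ! = n‼ * (2 * k)‼`, where `k < p` makes the second
factor prime to `p`. -/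
lemma factorization_doubleFactorial {p n : ℕ} (hp : p.Prime) (hp2 : 2 < p)
    (hn : oddScale n < 2 * p) : (n‼).factorization p = oddScale n / p := by
  rcases Nat.even_or_odd' n with ⟨k, rfl | rfl⟩
  · have h : oddScale (2 * k) = k := by simp [oddScale]
    rw [h] at hn ⊢
    exact factorization_two_mul_doubleFactorial hp hp2 hn
  · have h : oddScale (2 * k + 1) = 2 * k + 1 := by simp [oddScale]
    rw [h] at hn ⊢
    have h1 := factorization_factorial_of_lt hp hp2 hn
    rw [Nat.factorial_eq_mul_doubleFactorial, Nat.factorization_mul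
      (Nat.doubleFactorial_pos _).ne' (Nat.doubleFactorial_pos _).ne', Finsupp.add_apply,
      factorization_two_mul_doubleFactorial hp hp2 (by omega),
      Nat.div_eq_of_lt (by omega : k < p)] at h1
    simpa using h1

/-- Every solution has all its `n i` bounded in terms of `b` and `A` only. -/
lemma bound_of_eq_pow {r : ℕ} {b : ℕ} (hb : b ≠ 0) {A : Fin r → ℕ} (hA : ∀ i, 0 < A i)
    {d : ℕ} (hd : r < d) {n : Fin r → ℕ} {x : ℕ}
    (h : b * ∏ i, ((n i)‼ * A i ^ n i) = x ^ d) (i : Fin r) :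
    n i ≤ 2 * (2 * (b * ∏ i, A i) + 4) := by
  have : Nonempty (Fin r) := ⟨i⟩
  obtain ⟨j, hj⟩ := Finite.exists_max (fun i => oddScale (n i))
  by_contra! hlt
  set C := b * ∏ i, A i with hC
  have hC0 : 0 < C := Nat.mul_pos (Nat.pos_of_ne_zero hb) (Finset.prod_pos fun i _ => hA i)
  have hM : 2 * C + 4 < oddScale (n j) := by
    have := le_two_mul_oddScale (n i)
    have := hj i
    omega
  obtain ⟨p, hp, hp1, hp2⟩ := Nat.exists_prime_lt_and_le_two_mul (oddScale (n j) / 2) (by omega)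
  have hCp : ¬ p ∣ C := fun hdvd => by
    have := Nat.le_of_dvd hC0 hdvd
    omega
  have hbp : b.factorization p = 0 :=
    Nat.factorization_eq_zero_of_not_dvd fun hdvd => hCp (hdvd.mul_right _)
  have hAp : ∀ i, (A i).factorization p = 0 := fun i =>
    Nat.factorization_eq_zero_of_not_dvd fun hdvd => hCp
      ((hdvd.trans (Finset.dvd_prod_of_mem A (Finset.mem_univ i))).mul_left _)
  have hne : ∀ i, (n i)‼ * A i ^ n i ≠ 0 := fun i =>
    mul_ne_zero (Nat.doubleFactorial_pos _).ne' (pow_ne_zero _ (hA i).ne')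
  have hval : ∑ i, oddScale (n i) / p = d * x.factorization p := by
    have h1 := congrArg (fun y => y.factorization p) h
    simp only [Nat.factorization_pow, Finsupp.smul_apply, smul_eq_mul] at h1
    rw [← h1, Nat.factorization_mul hb (Finset.prod_ne_zero_iff.2 fun i _ => hne i),
      Finsupp.add_apply, hbp, zero_add, Nat.factorization_prod_apply fun i _ => hne i]
    refine Finset.sum_congr rfl fun i _ => ?_
    rw [Nat.factorization_mul (Nat.doubleFactorial_pos _).ne' (pow_ne_zero _ (hA i).ne'),
      Finsupp.add_apply, Nat.factorization_pow, Finsupp.smul_apply, hAp i,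
      factorization_doubleFactorial hp (by omega) (by have := hj i; omega)]
    simp
  have hle : ∑ i, oddScale (n i) / p ≤ r := by
    calc ∑ i, oddScale (n i) / p ≤ ∑ _i : Fin r, 1 := Finset.sum_le_sum fun i _ => by
          have := hj i
          exact Nat.lt_succ_iff.1 ((Nat.div_lt_iff_lt_mul hp.pos).2 (by omega))
      _ = r := by simp
  have hpos : 0 < ∑ i, oddScale (n i) / p :=
    (Nat.div_pos (by omega : p ≤ oddScale (n j)) hp.pos).trans_le
      (Finset.single_le_sum (f := fun i => oddScale (n i) / p) (fun _ _ => Nat.zero_le _)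
        (Finset.mem_univ j))
  have := Nat.le_of_dvd hpos ⟨_, hval⟩
  omega

lemma finite_int_pow_eq {d : ℕ} (hd : 0 < d) (c : ℤ) : {x : ℤ | x ^ d = c}.Finite := by
  refine (Set.finite_Icc (-(c.natAbs : ℤ)) c.natAbs).subset ?_
  rintro x rfl
  have : x.natAbs ≤ (x ^ d).natAbs := by
    rw [Int.natAbs_pow]
    exact Nat.le_self_pow hd.ne' _
  simp only [Set.mem_Icc]
  omega

theorem finite_solutions_doubleFactorial_pow (r : ℕ) (b : ℤ) (hb : b ≠ 0)
    (A : Fin r → ℕ) (hA : ∀ i, 0 < A i) (d : ℕ) (hd : r < d) :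
    {p : (Fin r → ℕ) × ℤ | (∀ i, 0 < p.1 i) ∧
      b * ∏ i, (((p.1 i)‼ : ℤ) * (A i : ℤ) ^ (p.1 i)) = p.2 ^ d}.Finite := by
  set B := 2 * (2 * (b.natAbs * ∏ i, A i) + 4)
  have hfin : (⋃ n ∈ Set.Iic (fun _ : Fin r => B), (fun x : ℤ => (n, x)) ''
      {x : ℤ | x ^ d = b * ∏ i, (((n i)‼ : ℤ) * (A i : ℤ) ^ (n i))}).Finite :=
    (Set.finite_Iic _).biUnion fun n _ => (finite_int_pow_eq (by omega) _).image _
  refine hfin.subset ?_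
  rintro ⟨n, x⟩ ⟨-, h⟩
  simp only [Set.mem_iUnion]
  refine ⟨n, fun i => ?_, x, h.symm, rfl⟩
  refine bound_of_eq_pow (Int.natAbs_ne_zero.2 hb) hA hd (x := x.natAbs) ?_ i
  have h1 := congrArg Int.natAbs h
  rw [Int.natAbs_mul, Int.natAbs_pow] at h1
  rw [← h1]
  congr 1
  exact_mod_cast (Int.natAbs_natCast _).symm
end

section
/- Fix a non-zero integer b, positive integers A_1, ..., A_r, and a positive integer d with d ≤ r. If b > 0, or if b < 0 and d is odd, then there are infinitely many tuples (n_1, ..., n_r, x) with each n_i a positive integer and x an integer satisfying b·(n_1‼)·A_1^(n_1)·(n_2‼)·A_2^(n_2)···(n_r‼)·A_r^(n_r) = x^d. If b < 0 and d is even, then this equation has no such solutions. -/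
/-!
The last `r - d` unknowns are set to `1`, the first `d` to a common value `N`, except that the very
first one is `N + 2`. Since `(N + 2)‼ = (N + 2) * N‼`, the left-hand side becomes
`(N‼) ^ d * (c * P ^ N * (N + 2))` for a nonzero integer `c` with the sign of `b` and the product
`P` of the first `d` bases. It therefore suffices to make `c * P ^ N * (N + 2)` a `d`-th power for
arbitrarily large `N`, which `exists_large_pow` does by taking
`N + 2 = d * (P ^ 2 * |c * d| ^ (d - 1) * t ^ d)`: the divisibility by `d` makes `P ^ (N + 2)` a
`d`-th power, and the other factors complete `c * d` to one.

For `b < 0` and `d` even the two sides have opposite signs.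
-/

open Nat

lemma exists_large_pow (c : ℤ) (d P : ℕ) (hd : 0 < d) (hP : 0 < P)
    (hc : 0 < c ∨ (c < 0 ∧ Odd d)) (K : ℕ) :
    ∃ (N : ℕ) (y : ℤ), K < N ∧ c * (P : ℤ) ^ N * (N + 2) = y ^ d := by
  have hc0 : c ≠ 0 := by rcases hc with h | h <;> omega
  -- The sign hypothesis is exactly what makes the completing factor `(c * d) ^ (d - 1)` positive.
  obtain ⟨u, hu0, hu⟩ : ∃ u : ℕ, 0 < u ∧ (u : ℤ) = (c * d) ^ (d - 1) := by
    refine ⟨(c * d).natAbs ^ (d - 1), by positivity, ?_⟩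
    push_cast
    rcases hc with h | ⟨_, h⟩
    · rw [abs_of_pos (by positivity)]
    · exact (Nat.Odd.sub_odd h odd_one).pow_abs _
  set s := P ^ 2 * u * (K + 3) ^ d with hs
  have h1 : K + 3 ≤ d * s := by
    calc K + 3 ≤ (K + 3) ^ d := Nat.le_self_pow hd.ne' _
      _ ≤ s := Nat.le_mul_of_pos_left _ (by positivity)
      _ ≤ d * s := Nat.le_mul_of_pos_left _ hd
  obtain ⟨N, hN⟩ : ∃ N, d * s = N + 2 := ⟨d * s - 2, by omega⟩
  refine ⟨N, c * d * (K + 3) * (P : ℤ) ^ s, by omega, ?_⟩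
  have hN' : (N : ℤ) + 2 = d * (P ^ 2 * (c * d) ^ (d - 1) * (K + 3) ^ d) := by
    rw [← hu]
    exact_mod_cast hN.symm
  calc c * (P : ℤ) ^ N * (N + 2)
      = (c * d) * (c * d) ^ (d - 1) * (K + 3) ^ d * (P : ℤ) ^ (N + 2) := by
        rw [hN']
        ring
    _ = (c * d * (K + 3) * (P : ℤ) ^ s) ^ d := by
        rw [← hN, mul_pow _ _ d, mul_pow _ _ d, ← pow_mul, mul_comm s d, mul_pow_sub_one hd.ne']

theorem infinite_solutions_doubleFactorial_pow (r : ℕ) (b : ℤ) (hb : b ≠ 0)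
    (A : Fin r → ℕ) (hA : ∀ i, 0 < A i) (d : ℕ) (hd : 0 < d) (hdr : d ≤ r) :
    ((0 < b ∨ (b < 0 ∧ Odd d)) →
      {p : (Fin r → ℕ) × ℤ | (∀ i, 0 < p.1 i) ∧
        b * ∏ i, (((p.1 i)‼ : ℤ) * (A i : ℤ) ^ (p.1 i)) = p.2 ^ d}.Infinite) ∧
    (b < 0 → Even d →
      ∀ (n : Fin r → ℕ) (x : ℤ), (∀ i, 0 < n i) →
        b * ∏ i, (((n i)‼ : ℤ) * (A i : ℤ) ^ (n i)) ≠ x ^ d) := by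
  constructor
  · intro h
    let z : Fin r := ⟨0, by omega⟩
    -- It suffices that the first unknown is unbounded on the solution set.
    apply Set.Infinite.of_image (fun p => p.1 z)
    apply Set.infinite_of_forall_exists_gt
    intro K
    set P : ℕ := ∏ i : Fin r, if i.1 < d then A i else 1 with hP
    set C : ℕ := ∏ i : Fin r, if i.1 < d then 1 else A i with hC
    have hP0 : 0 < P := Finset.prod_pos fun i _ => by split_ifs <;> simp [hA]
    have hC0 : 0 < C := Finset.prod_pos fun i _ => by split_ifs <;> simp [hA]
    have hq : (0 : ℤ) < C * A z ^ 2 := by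
      have := hA z
      positivity
    have hc : 0 < b * (C * A z ^ 2) ∨ (b * (C * A z ^ 2) < 0 ∧ Odd d) := by
      rcases h with h | ⟨h, ho⟩
      · exact Or.inl (mul_pos h hq)
      · exact Or.inr ⟨mul_neg_of_neg_of_pos h hq, ho⟩
    obtain ⟨N, y, hKN, hy⟩ := exists_large_pow _ d P hd hP0 hc K
    let n : Fin r → ℕ := fun i => if i = z then N + 2 else if i.1 < d then N else 1
    have hcard : (∏ i : Fin r, if i.1 < d then (N‼ : ℤ) else 1) = (N‼ : ℤ) ^ d := by
      rw [← Finset.prod_filter, Finset.prod_const, Fin.card_filter_val_lt, min_eq_right hdr]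
    have hterm : ∀ i : Fin r, ((n i)‼ : ℤ) * (A i : ℤ) ^ (n i) =
        (if i.1 < d then (N‼ : ℤ) else 1) * ((if i.1 < d then A i else 1 : ℕ) : ℤ) ^ N *
          ((if i.1 < d then 1 else A i : ℕ) : ℤ) *
          (if i = z then ((N : ℤ) + 2) * (A i : ℤ) ^ 2 else 1) := by
      intro i
      by_cases hi : i = z
      · have : i.1 < d := by rw [hi]; exact hd
        simp only [n, hi, if_true]
        rw [hi] at this
        simp only [this, if_true, Nat.doubleFactorial_add_two]
        push_cast
        ring
      · by_cases hi' : i.1 < d <;> simp [n, hi, hi']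
    refine ⟨N + 2, ⟨(n, N‼ * y), ⟨fun i => ?_, ?_⟩, by simp [n]⟩, by omega⟩
    · simp only [n]
      split_ifs <;> omega
    · simp only [hterm, Finset.prod_mul_distrib, hcard, Finset.prod_pow, ← Nat.cast_prod,
        Finset.prod_ite_eq', Finset.mem_univ, if_true]
      rw [← hP, ← hC, mul_pow, ← hy]
      ring
  · intro hneg he n x _ heq
    have hpos : 0 < ∏ i, (((n i)‼ : ℤ) * (A i : ℤ) ^ (n i)) := by
      refine Finset.prod_pos fun i _ => ?_
      have := hA i
      have := Nat.doubleFactorial_pos (n i)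
      positivity
    have h1 := mul_neg_of_neg_of_pos hneg hpos
    have h2 := he.pow_nonneg x
    omega
end

section
/- Assume the ABC conjecture: for every ε > 0 there is a constant K(ε) > 0 such that whenever A, B, C are pairwise coprime non-zero integers with A + B = C, then max{|A|,|B|,|C|} < K(ε)·rad(|A·B·C|)^(1+ε), where rad(m) denotes the product of the distinct primes dividing m. Let f ∈ ℚ[x] be a polynomial of degree d ≥ 2 which is not a monomial and has at least two distinct roots, let b be a non-zero integer, and let A_1, ..., A_r be positive integers. Then there are only finitely many tuples (n_1, ..., n_r, x) with each n_i a positive integer and x an integer satisfying b·(n_1‼)·A_1^(n_1)···(n_r‼)·A_r^(n_r) = f(x). -/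
/-!
The idea is to complete the `d`-th power and apply the abc conjecture once, over `ℤ`.

A rational translation removes the coefficient of degree `d - 1` of `f`. After clearing
denominators this gives integers `M, q, a ≠ 0`, `p` and `Q ∈ ℤ[X]` with `deg Q ≤ d - 2` such that
`M f(x) = a y ^ d + Q(y)` where `y = q x + p` (`exists_completed_power`). Here `Q ≠ 0`, since
otherwise `f` would have a single complex root.

Let `N = a y ^ d + Q(y) ≠ 0` and let `D` be the gcd of `a y ^ d` and `Q(y)`. The abc conjecture with
`ε = 1 / d`, applied to the equation divided by `D`, bounds `|a y ^ d / D| ^ d` by a constant times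
`(|a y| * |Q(y) / D| * rad N) ^ (d + 1)`. Since `|y Q(y)|` is `O(|y| ^ (d - 1))` and
`(d - 1) (d + 1) = d ^ 2 - 1`, this gives `|y| = O(rad N ^ (d + 1))` (`abs_le_rad_pow`).

For `N = M b ∏ n_i‼ A_i ^ n_i` and `n = max n_i`, the radical of `N` is at most a constant times the
primorial of `n`, hence `O(4 ^ n)`. So `n‼ ≤ |N| = O(|y| ^ d)` is at most exponential in `n`, and
`n` is bounded because `n! ≤ (n‼) ^ 2`. For each of the finitely many remaining tuples
`(n_1, …, n_r)`, `x` is a root of a fixed non-zero polynomial.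
-/

open Nat Polynomial

/-- The radical of a natural number: the product of its distinct prime divisors. -/
def rad (m : ℕ) : ℕ := ∏ p ∈ m.primeFactors, p

/-! ### The radical -/

theorem rad_pos (m : ℕ) : 0 < rad m :=
  Finset.prod_pos fun _ hp => (Nat.prime_of_mem_primeFactors hp).pos

theorem rad_le_self {m : ℕ} (hm : m ≠ 0) : rad m ≤ m :=
  Nat.le_of_dvd (Nat.pos_of_ne_zero hm) (Nat.prod_primeFactors_dvd m)

theorem rad_le_of_subset {m n : ℕ} (h : m.primeFactors ⊆ n.primeFactors) : rad m ≤ rad n :=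
  Finset.prod_le_prod_of_subset_of_one_le' h
    fun _ hp _ => (Nat.prime_of_mem_primeFactors hp).one_le

theorem rad_le_of_dvd {m n : ℕ} (h : m ∣ n) (hn : n ≠ 0) : rad m ≤ rad n :=
  rad_le_of_subset (Nat.primeFactors_mono h hn)

theorem rad_mul_le (m n : ℕ) (hm : m ≠ 0) (hn : n ≠ 0) : rad (m * n) ≤ rad m * rad n := by
  unfold rad
  rw [Nat.primeFactors_mul hm hn, ← Finset.prod_union_inter]
  exact Nat.le_mul_of_pos_right _
    (Finset.prod_pos fun _ hp =>
      (Nat.prime_of_mem_primeFactors (Finset.mem_inter.1 hp).1).pos)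

theorem rad_mul_pow_le (a y d : ℕ) (ha : a ≠ 0) (hy : y ≠ 0) : rad (a * y ^ d) ≤ a * y := by
  refine (rad_le_of_subset (n := a * y) ?_).trans (rad_le_self (mul_ne_zero ha hy))
  rw [Nat.primeFactors_mul ha (pow_ne_zero _ hy), Nat.primeFactors_mul ha hy]
  exact Finset.union_subset_union_right fun p hp => by
    have hpp := Nat.prime_of_mem_primeFactors hp
    exact Nat.mem_primeFactors.2
      ⟨hpp, hpp.dvd_of_dvd_pow (Nat.dvd_of_mem_primeFactors hp), hy⟩

/-- Every prime dividing the product divides `c`, divides some `A i`, or is at most `n`. -/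
theorem rad_prod_doubleFactorial_le {r : ℕ} (c : ℕ) (hc : c ≠ 0) (A : Fin r → ℕ)
    (hA : ∀ i, 0 < A i) (n : Fin r → ℕ) (m : ℕ) (hn : ∀ i, n i ≤ m) :
    rad (c * ∏ i, ((n i)‼ * A i ^ n i)) ≤ (c * ∏ i, A i) * 4 ^ m := by
  have hP : ∏ i, A i ≠ 0 := Finset.prod_ne_zero_iff.2 fun i _ => (hA i).ne'
  have h0 : c * ∏ i, A i ≠ 0 := mul_ne_zero hc hP
  have hs : (c * ∏ i, ((n i)‼ * A i ^ n i)).primeFactors ⊆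
      ((c * ∏ i, A i) * m !).primeFactors := by
    intro p hp
    have hpp := Nat.prime_of_mem_primeFactors hp
    have hpd := Nat.dvd_of_mem_primeFactors hp
    refine Nat.mem_primeFactors.2 ⟨hpp, ?_, mul_ne_zero h0 (Nat.factorial_ne_zero m)⟩
    rcases hpp.dvd_mul.1 hpd with h | h
    · exact (h.mul_right _).mul_right _
    · obtain ⟨i, -, hi⟩ := (hpp.prime.dvd_finsetProd_iff _).1 h
      rcases hpp.dvd_mul.1 hi with h1 | h1
      · refine Dvd.dvd.mul_left ?_ _
        have h2 : (n i)‼ ∣ (n i)! := by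
          rcases hk : n i with _ | k
          · simp
          · rw [Nat.factorial_eq_mul_doubleFactorial]; exact dvd_mul_right _ _
        exact h1.trans (h2.trans (Nat.factorial_dvd_factorial (hn i)))
      · exact (((hpp.dvd_of_dvd_pow h1).trans
          (Finset.dvd_prod_of_mem A (Finset.mem_univ i))).mul_left _).mul_right _
  calc _ ≤ rad ((c * ∏ i, A i) * m !) := rad_le_of_subset hs
    _ ≤ rad (c * ∏ i, A i) * rad (m !) := rad_mul_le _ _ h0 (Nat.factorial_ne_zero m)
    _ ≤ _ := by
      refine Nat.mul_le_mul (rad_le_self h0) (le_trans ?_ (primorial_le_four_pow m))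
      refine Finset.prod_le_prod_of_subset_of_one_le' ?_ ?_
      · intro p hp
        have hpp := Nat.prime_of_mem_primeFactors hp
        have := (hpp.dvd_factorial).1 (Nat.dvd_of_mem_primeFactors hp)
        simp [hpp]; omega
      · intro p hp _
        simp at hp
        exact hp.2.one_le

/-! ### Polynomials -/

theorem exists_abs_eval_le (Q : ℤ[X]) : ∃ c : ℕ, ∀ y : ℤ, y ≠ 0 → ∀ k, Q.natDegree ≤ k →
    (Q.eval y).natAbs ≤ c * y.natAbs ^ k := by
  refine ⟨∑ i ∈ Finset.range (Q.natDegree + 1), (Q.coeff i).natAbs, fun y hy k hk => ?_⟩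
  rw [Polynomial.eval_eq_sum_range, Finset.sum_mul]
  refine (Int.natAbs_sum_le _ _).trans (Finset.sum_le_sum fun i hi => ?_)
  rw [Int.natAbs_mul, Int.natAbs_pow]
  have : 0 < y.natAbs := Int.natAbs_pos.2 hy
  have : i ≤ k := by simp at hi; omega
  gcongr

/-- Completing the `d`-th power. `Q ≠ 0` because `f` is not of the form `l * (X + s) ^ d`, which has
only one complex root. -/
theorem exists_completed_power (f : ℚ[X]) (d : ℕ) (hd : 2 ≤ d) (hdeg : f.natDegree = d)
    (hroots : ∃ z w : ℂ, z ≠ w ∧ Polynomial.aeval z f = 0 ∧ Polynomial.aeval w f = 0) :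
    ∃ (M q p a : ℤ) (Q : ℤ[X]), M ≠ 0 ∧ q ≠ 0 ∧ a ≠ 0 ∧ Q ≠ 0 ∧ Q.natDegree + 2 ≤ d ∧
      ∀ x : ℤ, (M : ℚ) * f.eval (x : ℚ) =
        ((a * (q * x + p) ^ d + Q.eval (q * x + p) : ℤ) : ℚ) := by
  set l := f.coeff d with hl
  have hl0 : l ≠ 0 := by
    rw [hl, ← hdeg]
    exact Polynomial.leadingCoeff_ne_zero.2 fun h => by simp [h] at hdeg; omega
  have hdQ : (d : ℚ) ≠ 0 := by positivity
  -- the translation that kills the coefficient of degree `d - 1`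
  set s : ℚ := f.coeff (d - 1) / (d * l) with hs
  set R : ℚ[X] := f - C l * (X + C s) ^ d with hR
  have hRdeg : R.natDegree ≤ d - 2 := by
    rw [Polynomial.natDegree_le_iff_coeff_eq_zero]
    intro k hk
    rw [hR, Polynomial.coeff_sub, Polynomial.coeff_C_mul, Polynomial.coeff_X_add_C_pow]
    rcases lt_trichotomy k d with h | h | h
    · obtain rfl : k = d - 1 := by omega
      have h1 : d - (d - 1) = 1 := by omega
      have h2 : d.choose (d - 1) = d := by
        rw [← Nat.choose_symm (by omega), h1, Nat.choose_one_right]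
      rw [h1, h2, hs]
      field_simp
      ring
    · subst h
      simp [hl]
    · rw [Polynomial.coeff_eq_zero_of_natDegree_lt (by omega), Nat.choose_eq_zero_of_lt h]
      simp
  have hR0 : R ≠ 0 := by
    intro h
    obtain ⟨z, w, hzw, hz, hw⟩ := hroots
    have hf : f = C l * (X + C s) ^ d := sub_eq_zero.1 h
    have key : ∀ t : ℂ, Polynomial.aeval t f = 0 → t = - (s : ℂ) := by
      intro t ht
      rw [hf] at ht
      simp only [map_mul, map_pow, map_add, Polynomial.aeval_C, Polynomial.aeval_X] at ht
      rcases mul_eq_zero.1 ht with h | h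
      · exact absurd (by simpa using h) hl0
      · have := eq_zero_of_pow_eq_zero h
        simp at this
        linear_combination this
    exact hzw ((key z hz).trans (key w hw).symm)
  set q : ℤ := (s.den : ℤ) with hq
  have hq0 : (q : ℚ) ≠ 0 := by simp [hq]
  have hsq : s * q = s.num := by simp [hq, Rat.mul_den_eq_num]
  -- `R` in terms of the integral variable `y = q * x + s.num`
  set R₂ : ℚ[X] := R.comp (C (q : ℚ)⁻¹ * X - C s) with hR₂
  have hlin : (C (q : ℚ)⁻¹ * X - C s).natDegree = 1 := by
    rw [sub_eq_add_neg, ← C_neg]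
    exact Polynomial.natDegree_linear (inv_ne_zero hq0)
  have hR₂deg : R₂.natDegree ≤ d - 2 := by
    rw [hR₂, Polynomial.natDegree_comp, hlin, mul_one]; exact hRdeg
  have hR₂0 : R₂ ≠ 0 := by
    intro h
    rcases Polynomial.comp_eq_zero_iff.1 h with h | ⟨-, h⟩
    · exact hR0 h
    · rw [h, Polynomial.natDegree_C] at hlin; omega
  obtain ⟨m, hm, hmQ⟩ := IsLocalization.integerNormalization_spec (nonZeroDivisors ℤ) R₂
  set Q₀ := IsLocalization.integerNormalization (nonZeroDivisors ℤ) R₂ with hQ₀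
  have hm0 : m ≠ 0 := nonZeroDivisors.ne_zero hm
  have hm0' : (m : ℚ) ≠ 0 := by exact_mod_cast hm0
  have hQm : Q₀.map (Int.castRingHom ℚ) = C (m : ℚ) * R₂ := by
    have : Q₀.map (algebraMap ℤ ℚ) = m • R₂ := hmQ
    rw [zsmul_eq_mul] at this
    rw [Polynomial.C_eq_intCast]
    exact this
  have hinj : Function.Injective (Int.castRingHom ℚ) := Int.cast_injective
  have hQ₀deg : Q₀.natDegree ≤ d - 2 := by
    rw [← Polynomial.natDegree_map_eq_of_injective hinj, hQm,
      Polynomial.natDegree_C_mul hm0']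
    exact hR₂deg
  have hQ₀0 : Q₀ ≠ 0 := by
    intro h
    rw [h, Polynomial.map_zero] at hQm
    exact mul_ne_zero (by simpa using hm0) hR₂0 hQm.symm
  have hql : q ^ d * (l.den : ℤ) ≠ 0 :=
    mul_ne_zero (pow_ne_zero _ (by exact_mod_cast hq0)) (by simp)
  refine ⟨m * (q ^ d * l.den), q, s.num, m * l.num, C (q ^ d * (l.den : ℤ)) * Q₀,
    mul_ne_zero hm0 hql, by exact_mod_cast hq0, mul_ne_zero hm0 (by simpa using hl0),
    mul_ne_zero (by simpa using hql) hQ₀0, ?_, ?_⟩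
  · rw [Polynomial.natDegree_C_mul hql]; omega
  · intro x
    have hev : ((Q₀.eval (q * x + s.num) : ℤ) : ℚ) = m * R.eval (x : ℚ) := by
      have h1 : ((Q₀.eval (q * x + s.num) : ℤ) : ℚ) =
          (Q₀.map (Int.castRingHom ℚ)).eval ((q * x + s.num : ℤ) : ℚ) := by
        rw [Polynomial.eval_intCast_map]; simp
      rw [h1, hQm, hR₂, Polynomial.eval_mul, Polynomial.eval_C, Polynomial.eval_comp]
      congr 2
      simp only [eval_sub, eval_mul, eval_C, eval_X]
      push_cast
      rw [← hsq]
      field_simp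
      ring
    have hfe : f.eval (x : ℚ) = l * (x + s) ^ d + R.eval (x : ℚ) := by
      simp [hR]
    have hll : l * l.den = l.num := Rat.mul_den_eq_num l
    rw [Polynomial.eval_mul, Polynomial.eval_C]
    push_cast
    rw [hev, hfe, ← hsq, ← hll]
    have : (q * x + s * q : ℚ) ^ d = q ^ d * (x + s) ^ d := by rw [← mul_pow]; ring
    rw [this]
    ring

/-! ### Consequences of the abc conjecture -/

/-- The abc conjecture with exponent `1 + 1 / d`, raised to the `d`-th power. -/
theorem abc_nat_pow
    (habc : ∀ ε : ℝ, 0 < ε → ∃ K : ℝ, 0 < K ∧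
      ∀ A B C : ℤ, A ≠ 0 → B ≠ 0 → C ≠ 0 →
        IsCoprime A B → IsCoprime A C → IsCoprime B C → A + B = C →
        (max (max A.natAbs B.natAbs) C.natAbs : ℝ) <
          K * (rad (A * B * C).natAbs : ℝ) ^ (1 + ε)) (d : ℕ) (hd : 0 < d) :
    ∃ K : ℝ, 0 < K ∧ ∀ A B C : ℤ, A ≠ 0 → B ≠ 0 → C ≠ 0 → IsCoprime A B → A + B = C →
      (A.natAbs : ℝ) ^ d ≤ K * (rad (A * B * C).natAbs : ℝ) ^ (d + 1) := by
  have hd' : (0 : ℝ) < d := by exact_mod_cast hd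
  obtain ⟨K, hK, h⟩ := habc (1 / d) (by positivity)
  refine ⟨K ^ d, by positivity, fun A B C hA hB hC hAB hs => ?_⟩
  have hAC : IsCoprime A C := by
    rw [← hs]; simpa [add_comm] using hAB.add_mul_left_right 1
  have hBC : IsCoprime B C := by
    rw [← hs]; simpa using hAB.symm.add_mul_left_right 1
  have h1 := h A B C hA hB hC hAB hAC hBC hs
  have h2 : (A.natAbs : ℝ) ≤ K * (rad (A * B * C).natAbs : ℝ) ^ (1 + 1 / (d : ℝ)) :=
    ((le_max_left _ _).trans (le_max_left _ _)).trans h1.le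
  have h3 := pow_le_pow_left₀ (by positivity) h2 d
  rw [mul_pow, ← Real.rpow_mul_natCast (by positivity)] at h3
  have h4 : (1 + 1 / (d : ℝ)) * d = ((d + 1 : ℕ) : ℝ) := by
    push_cast; field_simp
  rwa [h4, Real.rpow_natCast] at h3

/-- The place where abc is used: the absence of a term of degree `d - 1` makes the exponent of `y`
on the radical side smaller than on the height side. -/
theorem abs_le_rad_pow
    (habc : ∀ ε : ℝ, 0 < ε → ∃ K : ℝ, 0 < K ∧
      ∀ A B C : ℤ, A ≠ 0 → B ≠ 0 → C ≠ 0 →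
        IsCoprime A B → IsCoprime A C → IsCoprime B C → A + B = C →
        (max (max A.natAbs B.natAbs) C.natAbs : ℝ) <
          K * (rad (A * B * C).natAbs : ℝ) ^ (1 + ε))
    (d : ℕ) (a : ℤ) (ha : a ≠ 0) (Q : ℤ[X]) (hQ : Q ≠ 0) (hQd : Q.natDegree + 2 ≤ d) :
    ∃ K : ℝ, 0 < K ∧ ∀ y N : ℤ, N ≠ 0 → a * y ^ d + Q.eval y = N →
      (y.natAbs : ℝ) ≤ K * (rad N.natAbs : ℝ) ^ (d + 1) := by
  obtain ⟨K, hK, habc⟩ := abc_nat_pow habc d (by omega)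
  obtain ⟨c, hc⟩ := exists_abs_eval_le Q
  -- the second summand takes care of the integer roots of `Q`
  set S : ℕ := ∑ z ∈ Q.roots.toFinset, z.natAbs with hS
  refine ⟨K * a.natAbs * c ^ (d + 1) + S + 1, by positivity, fun y N hN hy => ?_⟩
  have hrad : (1 : ℝ) ≤ (rad N.natAbs : ℝ) ^ (d + 1) :=
    one_le_pow₀ (by exact_mod_cast rad_pos _)
  by_cases hy0 : y = 0
  · subst hy0; simp; positivity
  by_cases hQy : Q.eval y = 0
  · have h1 : y.natAbs ≤ S :=
      Finset.single_le_sum (f := fun z : ℤ => z.natAbs) (fun _ _ => Nat.zero_le _)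
        (by simp [hQ, hQy])
    have h2 : (y.natAbs : ℝ) ≤ S := by exact_mod_cast h1
    have h3 : (0 : ℝ) ≤ K * a.natAbs * c ^ (d + 1) := by positivity
    nlinarith
  set U := a * y ^ d with hU
  set V := Q.eval y with hV
  have hU0 : U ≠ 0 := mul_ne_zero ha (pow_ne_zero _ hy0)
  obtain ⟨D, u, v, hD, huv, hu, hv⟩ : ∃ D u v : ℤ, D ≠ 0 ∧ IsCoprime u v ∧ U = D * u ∧
      V = D * v := by
    have hg : (Int.gcd U V : ℤ) ≠ 0 := by
      exact_mod_cast (Int.gcd_pos_of_ne_zero_left V hU0).ne'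
    refine ⟨Int.gcd U V, U / Int.gcd U V, V / Int.gcd U V, hg, ?_,
      (Int.mul_ediv_cancel' (Int.gcd_dvd_left ..)).symm,
      (Int.mul_ediv_cancel' (Int.gcd_dvd_right ..)).symm⟩
    rw [Int.isCoprime_iff_gcd_eq_one]
    exact Int.gcd_ediv_gcd_ediv_gcd (Int.gcd_pos_of_ne_zero_left V hU0)
  have hu0 : u ≠ 0 := by rintro rfl; simp at hu; exact hU0 hu
  have hv0 : v ≠ 0 := by rintro rfl; simp at hv; exact hQy hv
  have hw : N = D * (u + v) := by rw [← hy, hu, hv]; ring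
  have hw0 : u + v ≠ 0 := fun h => hN (by rw [hw, h, mul_zero])
  have h1 := habc u v (u + v) hu0 hv0 hw0 huv rfl
  have hra : rad u.natAbs ≤ a.natAbs * y.natAbs := by
    refine (rad_le_of_dvd (Int.natAbs_dvd_natAbs.2 ⟨D, by rw [hu]; ring⟩)
      (Int.natAbs_ne_zero.2 hU0)).trans ?_
    rw [hU, Int.natAbs_mul, Int.natAbs_pow]
    exact rad_mul_pow_le _ _ _ (Int.natAbs_ne_zero.2 ha) (Int.natAbs_ne_zero.2 hy0)
  have hrv : rad v.natAbs ≤ v.natAbs := rad_le_self (Int.natAbs_ne_zero.2 hv0)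
  have hrw : rad (u + v).natAbs ≤ rad N.natAbs :=
    rad_le_of_dvd (Int.natAbs_dvd_natAbs.2 ⟨D, by rw [hw]; ring⟩) (Int.natAbs_ne_zero.2 hN)
  have hrabc : rad (u * v * (u + v)).natAbs ≤
      a.natAbs * y.natAbs * v.natAbs * rad N.natAbs := by
    rw [Int.natAbs_mul, Int.natAbs_mul]
    have e1 := Int.natAbs_ne_zero.2 hu0
    have e2 := Int.natAbs_ne_zero.2 hv0
    have e3 := Int.natAbs_ne_zero.2 hw0
    refine (rad_mul_le _ _ (mul_ne_zero e1 e2) e3).trans (Nat.mul_le_mul ?_ hrw)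
    exact (rad_mul_le _ _ e1 e2).trans (Nat.mul_le_mul hra hrv)
  have hVc : V.natAbs ≤ c * y.natAbs ^ (d - 2) := hc y hy0 _ (by omega)
  have eU : (a.natAbs : ℝ) * y.natAbs ^ d = D.natAbs * u.natAbs := by
    have := congrArg Int.natAbs hu
    rw [hU, Int.natAbs_mul, Int.natAbs_mul, Int.natAbs_pow] at this
    exact_mod_cast this
  have eV : (V.natAbs : ℝ) = D.natAbs * v.natAbs := by
    rw [hv, Int.natAbs_mul]; push_cast; ring
  have hVc' : (V.natAbs : ℝ) ≤ c * y.natAbs ^ (d - 2) := by exact_mod_cast hVc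
  have hD1 : (1 : ℝ) ≤ D.natAbs := by exact_mod_cast Int.natAbs_pos.2 hD
  have ha1 : (1 : ℝ) ≤ a.natAbs := by exact_mod_cast Int.natAbs_pos.2 ha
  have hy1 : (1 : ℝ) ≤ y.natAbs := by exact_mod_cast Int.natAbs_pos.2 hy0
  have hrabc' : (rad (u * v * (u + v)).natAbs : ℝ) ≤
      a.natAbs * y.natAbs * v.natAbs * rad N.natAbs := by exact_mod_cast hrabc
  clear_value U V
  have hρ : (0 : ℝ) ≤ (rad (u * v * (u + v)).natAbs : ℝ) := by positivity
  generalize (rad (u * v * (u + v)).natAbs : ℝ) = ρ at *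
  have hρ0 : (0 : ℝ) ≤ (rad N.natAbs : ℝ) := by positivity
  generalize (rad N.natAbs : ℝ) = ν at *
  generalize (a.natAbs : ℝ) = α at *
  generalize (y.natAbs : ℝ) = t at *
  have hu' : (0 : ℝ) ≤ (u.natAbs : ℝ) := by positivity
  have hv' : (0 : ℝ) ≤ (v.natAbs : ℝ) := by positivity
  generalize (u.natAbs : ℝ) = u' at *
  generalize (v.natAbs : ℝ) = v' at *
  generalize (D.natAbs : ℝ) = δ at *
  have hc0 : (0 : ℝ) ≤ (c : ℝ) := by positivity
  generalize (c : ℝ) = c' at *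
  generalize (V.natAbs : ℝ) = V' at *
  have hS0 : (0 : ℝ) ≤ (S : ℝ) := by positivity
  have hρ1 : u' ^ d ≤ K * (α * t * v' * ν) ^ (d + 1) := by
    exact h1.trans (by gcongr)
  obtain ⟨k, rfl⟩ : ∃ k, d = k + 2 := ⟨d - 2, by omega⟩
  simp only [Nat.add_sub_cancel] at hVc'
  -- multiplying by `δ ^ d ≤ δ ^ (d + 1)` removes the gcd
  have h2 : (α * t ^ (k + 2)) ^ (k + 2) ≤ K * (α * t * (c' * t ^ k) * ν) ^ (k + 2 + 1) := by
    calc (α * t ^ (k + 2)) ^ (k + 2) = δ ^ (k + 2) * u' ^ (k + 2) := by rw [eU, mul_pow]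
      _ ≤ δ ^ (k + 2 + 1) * (K * (α * t * v' * ν) ^ (k + 2 + 1)) := by
        exact mul_le_mul (pow_le_pow_right₀ hD1 (by omega)) hρ1 (by positivity) (by positivity)
      _ = K * (α * t * (δ * v') * ν) ^ (k + 2 + 1) := by ring
      _ ≤ _ := by
        rw [← eV]
        have : 0 ≤ V' := by rw [eV]; positivity
        gcongr
  have h3 : (α ^ (k + 2) * t ^ ((k + 1) * (k + 3))) * t ≤
      (α ^ (k + 2) * t ^ ((k + 1) * (k + 3))) * (K * α * c' ^ (k + 2 + 1) * ν ^ (k + 2 + 1)) := by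
    calc _ = (α * t ^ (k + 2)) ^ (k + 2) := by ring
      _ ≤ _ := h2
      _ = _ := by ring
  have h4 := le_of_mul_le_mul_left h3 (by positivity)
  refine h4.trans ?_
  gcongr
  linarith

/-! ### Growth of the double factorial -/

theorem doubleFactorial_le_succ : ∀ k : ℕ, k‼ ≤ (k + 1)‼
  | 0 => by simp
  | 1 => by decide
  | k + 2 => by
    rw [Nat.doubleFactorial_add_two, show k + 2 + 1 = (k + 1) + 2 from rfl,
      Nat.doubleFactorial_add_two]
    exact Nat.mul_le_mul (by omega) (doubleFactorial_le_succ k)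

/-- The double factorial outgrows every exponential, since `n ! ≤ (n‼) ^ 2`. -/
theorem doubleFactorial_bounded (K L : ℝ) (hK : 0 < K) :
    ∃ B : ℕ, ∀ n : ℕ, (n‼ : ℝ) ≤ K * L ^ n → n ≤ B := by
  have ht := FloorSemiring.tendsto_pow_div_factorial_atTop (L ^ 2)
  have hK2 : 0 < 1 / K ^ 2 := by positivity
  obtain ⟨B, hB⟩ := Filter.eventually_atTop.1 (ht.eventually_lt_const hK2)
  refine ⟨B, fun n hn => ?_⟩
  by_contra hlt
  have h1 := hB n (by omega)
  have hf : (0 : ℝ) < n ! := by exact_mod_cast Nat.factorial_pos n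
  rw [div_lt_div_iff₀ hf (by positivity)] at h1
  have h2 : n ! ≤ n‼ ^ 2 := by
    rcases n with _ | k
    · simp
    · rw [Nat.factorial_eq_mul_doubleFactorial, sq]
      exact Nat.mul_le_mul_left _ (doubleFactorial_le_succ k)
  have h3 : (n ! : ℝ) ≤ (n‼ : ℝ) ^ 2 := by exact_mod_cast h2
  have h4 := pow_le_pow_left₀ (by positivity) hn 2
  have h5 : (K * L ^ n) ^ 2 = (L ^ 2) ^ n * K ^ 2 := by ring
  linarith

/-- The largest entry of the tuple (`0` for the empty tuple) already contributes its factor. -/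
theorem doubleFactorial_sup_le {r : ℕ} (A : Fin r → ℕ) (hA : ∀ i, 0 < A i) (n : Fin r → ℕ) :
    (Finset.univ.sup n)‼ ≤ ∏ i, ((n i)‼ * A i ^ n i) := by
  have hpos : ∀ i, 1 ≤ (n i)‼ * A i ^ n i := fun i =>
    Nat.mul_pos (Nat.doubleFactorial_pos _) (pow_pos (hA i) _)
  rcases (Finset.univ : Finset (Fin r)).eq_empty_or_nonempty with h | h
  · rw [h]; simp
  · obtain ⟨i, -, hi⟩ := Finset.exists_mem_eq_sup _ h n
    rw [hi]
    exact (Nat.le_mul_of_pos_right _ (pow_pos (hA i) _)).trans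
      (Finset.single_le_prod' (f := fun i => (n i)‼ * A i ^ n i) (fun i _ => hpos i)
        (Finset.mem_univ i))

theorem abc_implies_finite_solutions_doubleFactorial_poly
    (habc : ∀ ε : ℝ, 0 < ε → ∃ K : ℝ, 0 < K ∧
      ∀ A B C : ℤ, A ≠ 0 → B ≠ 0 → C ≠ 0 →
        IsCoprime A B → IsCoprime A C → IsCoprime B C → A + B = C →
        (max (max A.natAbs B.natAbs) C.natAbs : ℝ) <
          K * (rad (A * B * C).natAbs : ℝ) ^ (1 + ε))
    (f : Polynomial ℚ) (d : ℕ) (hd : 2 ≤ d) (hdeg : f.natDegree = d)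
    (hmono : ¬ ∃ (c : ℚ) (k : ℕ), f = Polynomial.C c * Polynomial.X ^ k)
    (hroots : ∃ z w : ℂ, z ≠ w ∧ Polynomial.aeval z f = 0 ∧ Polynomial.aeval w f = 0)
    (r : ℕ) (b : ℤ) (hb : b ≠ 0) (A : Fin r → ℕ) (hA : ∀ i, 0 < A i) :
    {p : (Fin r → ℕ) × ℤ | (∀ i, 0 < p.1 i) ∧
      (b : ℚ) * ∏ i, (((p.1 i)‼ : ℚ) * (A i : ℚ) ^ (p.1 i)) = f.eval (p.2 : ℚ)}.Finite := by
  obtain ⟨M, q, p, a, Q, hM, hq, ha, hQ, hQd, hf⟩ := exists_completed_power f d hd hdeg hroots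
  obtain ⟨K, hK, hy⟩ := abs_le_rad_pow habc d a ha Q hQ hQd
  obtain ⟨c, hc⟩ := exists_abs_eval_le Q
  set E : ℕ := (M * b).natAbs * ∏ i, A i with hE
  -- `|N| ≤ |a| |y| ^ d + c |y| ^ d + |Q(0)|`, where the last term accounts for `y = 0`
  set K₁ : ℝ := (a.natAbs + c) * (K * (E : ℝ) ^ (d + 1)) ^ d + (Q.eval 0).natAbs + 1 with hK₁
  set L : ℝ := (4 ^ (d + 1)) ^ d with hL
  obtain ⟨B, hB⟩ := doubleFactorial_bounded K₁ L (by positivity)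
  have hbound : ∀ (n : Fin r → ℕ) (x : ℤ),
      (b : ℚ) * ∏ i, (((n i)‼ : ℚ) * (A i : ℚ) ^ (n i)) = f.eval (x : ℚ) → ∀ i, n i ≤ B := by
    intro n x hx
    set P : ℕ := ∏ i, ((n i)‼ * A i ^ n i) with hP
    set m := Finset.univ.sup n with hm
    have hnm : ∀ i, n i ≤ m := fun i => Finset.le_sup (Finset.mem_univ i)
    have hmP : m‼ ≤ P := doubleFactorial_sup_le A hA n
    have hP0 : 0 < P := (Nat.doubleFactorial_pos m).trans_le hmP
    have hMb : M * b ≠ 0 := mul_ne_zero hM hb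
    have hN0 : M * b * (P : ℤ) ≠ 0 := mul_ne_zero hMb (by exact_mod_cast hP0.ne')
    have heq : a * (q * x + p) ^ d + Q.eval (q * x + p) = M * b * (P : ℤ) := by
      have h1 := hf x
      rw [← hx] at h1
      have h2 : ((M * b * (P : ℤ) : ℤ) : ℚ) =
          M * (b * ∏ i, (((n i)‼ : ℚ) * (A i : ℚ) ^ (n i))) := by
        rw [hP]; push_cast; ring
      rw [← h2] at h1
      exact_mod_cast h1.symm
    have h1 := hy _ _ hN0 heq
    set y := q * x + p with hydef
    have hrad : (rad (M * b * (P : ℤ)).natAbs : ℝ) ≤ E * 4 ^ m := by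
      rw [Int.natAbs_mul, Int.natAbs_natCast]
      exact_mod_cast rad_prod_doubleFactorial_le _ (Int.natAbs_ne_zero.2 hMb) A hA n m hnm
    have h2 : (y.natAbs : ℝ) ≤ K * (E * 4 ^ m) ^ (d + 1) :=
      h1.trans (by gcongr)
    have h3 : (m‼ : ℝ) ≤ (a.natAbs + c) * (y.natAbs : ℝ) ^ d + (Q.eval 0).natAbs := by
      have h4 : P ≤ (M * b * (P : ℤ)).natAbs := by
        rw [Int.natAbs_mul, Int.natAbs_natCast]
        exact Nat.le_mul_of_pos_left _ (Int.natAbs_pos.2 hMb)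
      have h5 : (M * b * (P : ℤ)).natAbs ≤
          (a.natAbs + c) * y.natAbs ^ d + (Q.eval 0).natAbs := by
        rw [← heq]
        refine (Int.natAbs_add_le _ _).trans ?_
        rw [Int.natAbs_mul, Int.natAbs_pow]
        by_cases hy0 : y = 0
        · rw [hy0]; simp [show d ≠ 0 by omega]
        · have := hc y hy0 d (by omega)
          rw [add_mul]
          omega
      exact_mod_cast hmP.trans (h4.trans h5)
    have h6 : (m‼ : ℝ) ≤ K₁ * L ^ m := by
      have hL1 : (1 : ℝ) ≤ L ^ m := by
        apply one_le_pow₀; apply one_le_pow₀; apply one_le_pow₀; norm_num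
      calc (m‼ : ℝ) ≤ _ := h3
        _ ≤ (a.natAbs + c) * (K * (E * 4 ^ m) ^ (d + 1)) ^ d + (Q.eval 0).natAbs := by gcongr
        _ = (a.natAbs + c) * (K * (E : ℝ) ^ (d + 1)) ^ d * L ^ m + (Q.eval 0).natAbs := by
          rw [hL]
          simp only [mul_pow, ← pow_mul]
          ring
        _ ≤ K₁ * L ^ m := by
          rw [hK₁]
          have : (0 : ℝ) ≤ (Q.eval 0).natAbs := by positivity
          nlinarith
    exact fun i => (hnm i).trans (hB m h6)
  have hfin : ∀ v : ℚ, {x : ℤ | f.eval (x : ℚ) = v}.Finite := by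
    intro v
    have hne : f - C v ≠ 0 := by
      intro h
      rw [sub_eq_zero.1 h, Polynomial.natDegree_C] at hdeg
      omega
    refine ((f - C v).roots.toFinset.finite_toSet.preimage
      (Int.cast_injective (α := ℚ)).injOn).subset ?_
    intro x hx
    have hx' : f.eval (x : ℚ) = v := hx
    simp [Polynomial.mem_roots hne, hx']
  refine ((Set.finite_Icc (0 : Fin r → ℕ) (fun _ => B)).biUnion
    (t := fun n => {n} ×ˢ {x : ℤ | f.eval (x : ℚ) =
      (b : ℚ) * ∏ i, (((n i)‼ : ℚ) * (A i : ℚ) ^ (n i))})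
    fun n _ => (Set.finite_singleton n).prod (hfin _)).subset ?_
  rintro ⟨n, x⟩ ⟨-, hx⟩
  simp only [Set.mem_iUnion]
  exact ⟨n, ⟨fun _ => Nat.zero_le _, hbound n x hx⟩, rfl, hx.symm⟩
end
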